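/- arXiv:math/0001068 — 3 statements merged into one kernel-verified Lean document; each statement's English description precedes it below -/
import Mathlib

section
/- Let 𝒪 be a polynomial ring over a field k of characteristic zero, 𝔥 ⊆ 𝔤 ideals with 𝔥 unmixed and 𝔤 a radical ideal generated by an 𝒪-regular sequence g₁,…,g_n, and assume the localization of 𝒪/𝔥 at (the image of) every minimal prime of 𝔤 is a regular local ring. Suppose for some 0 ≤ t ≤ n: (1) the images of g₁,…,g_t in the conormal module M = 𝔤/(𝔤²+𝔥) lie in the torsion T(M); (2) for every associated prime 𝔭 of 𝒪/𝔤, the images of g_{t+1},…,g_n in (𝒪/𝔥)_𝔭̄ generate (𝔤/𝔥)_𝔭̄ and form a regular sequence there (i.e. generate it as a complete intersection ideal). Then ∫_𝔥 𝔤 = (g₁,…,g_t) + (g_{t+1},…,g_n)². -/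
open Ideal

/-- `ξ ∈ Der_h(O)`: the derivation `ξ` preserves the ideal `h`. -/
def PreservesIdeal {k O : Type*} [CommRing k] [CommRing O] [Algebra k O]
    (h : Ideal O) (xi : Derivation k O O) : Prop :=
  ∀ x ∈ h, xi x ∈ h

/-- The primitive ideal `∫_h g` of `g` relative to `h`: all `f ∈ g` such that
`ξ f ∈ g` for every derivation `ξ` preserving `h`. -/
def primitiveIdeal (k : Type*) {O : Type*} [CommRing k] [CommRing O] [Algebra k O]
    (h g : Ideal O) : Ideal O where
  carrier := {f | f ∈ g ∧ ∀ xi : Derivation k O O, PreservesIdeal h xi → xi f ∈ g}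
  add_mem' := fun {a b} ha hb =>
    ⟨g.add_mem ha.1 hb.1, fun xi hxi => by
      rw [map_add]; exact g.add_mem (ha.2 xi hxi) (hb.2 xi hxi)⟩
  zero_mem' := ⟨g.zero_mem, fun xi _ => by simp⟩
  smul_mem' := fun c f hf =>
    ⟨g.smul_mem c hf.1, fun xi hxi => by
      rw [smul_eq_mul, Derivation.leibniz]
      exact g.add_mem (g.smul_mem _ (hf.2 xi hxi))
        (by rw [smul_eq_mul]; exact Ideal.mul_mem_right _ g hf.1)⟩

/-- The set of elements of `g` whose class in the conormal module `M = g/(g² + h)` is a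
torsion element over `O/g`, i.e. is killed by a non-zero-divisor of `O/g`.  This is the
preimage in `O` of the torsion submodule `T(M)` of `M`. -/
def torsionSet {O : Type*} [CommRing O] (h g : Ideal O) : Set O :=
  {f | f ∈ g ∧ ∃ β : O,
    Ideal.Quotient.mk g β ∈ nonZeroDivisors (O ⧸ g) ∧ β * f ∈ g ^ 2 ⊔ h}

/-- An ideal is unmixed (has no embedded primes): every associated prime of `O/I` is a
minimal prime of `I`. -/
def IsUnmixed {O : Type*} [CommRing O] (I : Ideal O) : Prop :=
  associatedPrimes O (O ⧸ I) ⊆ I.minimalPrimes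

/-- A regular local ring: a noetherian local ring whose maximal ideal can be generated by
Krull-dimension many elements. -/
def IsRegularLocal (R : Type*) [CommRing R] : Prop :=
  IsNoetherianRing R ∧ IsLocalRing R ∧ ∃ s : Finset R,
    (Ideal.span (s : Set R)).IsMaximal ∧ (s.card : WithBot ℕ∞) = ringKrullDim R

/-- The localization of `R` at a prime ideal (with the primality assumption explicit). -/
abbrev locAt {R : Type*} [CommRing R] (q : Ideal R) (hq : q.IsPrime) : Type _ :=
  @Localization.AtPrime R _ q hq

/-- The localization of `O/h` at the image of the prime `p` is a regular local ring. -/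
def regularAtImage {O : Type*} [CommRing O] (h p : Ideal O) : Prop :=
  ∀ hP : (p.map (Ideal.Quotient.mk h)).IsPrime,
    IsRegularLocal (locAt (p.map (Ideal.Quotient.mk h)) hP)

/-- The `(t+1)`-st through `n`-th members `g_{t+1}, …, g_n` of a family `g_1, …, g_n`. -/
def tailFam {O : Type*} {n : ℕ} (gs : Fin n → O) (t : ℕ) (j : Fin (n - t)) : O :=
  gs ⟨t + (j : ℕ), by have := j.isLt; omega⟩

/-- The images of `g_{t+1}, …, g_n` in the localization of `O/h` at the image of the
prime `p` form a regular sequence and generate the localization of `g/h` there, i.e. they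
generate it as a complete intersection ideal. -/
def generatesAsCI {O : Type*} [CommRing O] (h g : Ideal O) {n : ℕ}
    (gs : Fin n → O) (t : ℕ) (p : Ideal O) : Prop :=
  ∀ hP : (p.map (Ideal.Quotient.mk h)).IsPrime,
    RingTheory.Sequence.IsRegular (locAt (p.map (Ideal.Quotient.mk h)) hP)
      (List.ofFn fun j : Fin (n - t) =>
        algebraMap (O ⧸ h) (locAt (p.map (Ideal.Quotient.mk h)) hP)
          (Ideal.Quotient.mk h (tailFam gs t j))) ∧
    Ideal.span (Set.range fun j : Fin (n - t) =>
        algebraMap (O ⧸ h) (locAt (p.map (Ideal.Quotient.mk h)) hP)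
          (Ideal.Quotient.mk h (tailFam gs t j))) =
      (g.map (Ideal.Quotient.mk h)).map
        (algebraMap (O ⧸ h) (locAt (p.map (Ideal.Quotient.mk h)) hP))

/-!
Let `p` be a minimal prime of `g`, `q` its image in `O ⧸ h`, and `S` the local ring of `O ⧸ h` at
`q`. Since `g` is radical, it generates the maximal ideal `m` of `S`, which is therefore generated
by the regular sequence of the `g_{t+i}`. By the Jacobian criterion `S` is formally smooth over
`k`, so every element of `m` outside `m²` is sent to a unit by some derivation of `S`. After
clearing denominators such a derivation comes from `O ⧸ h`, and it lifts to a derivation of `O`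
preserving `h`. Hence, if all derivations preserving `h` send `∑ aᵢ g_{t+i}` into `g`, then this
sum lies in `m²`; as the `g_{t+i}` form a basis of `m/m²`, each `aᵢ` lies in `p`. Letting `p`
vary, each `aᵢ` lies in `g`. Conversely, a derivation preserving `h` induces an `O ⧸ g`-linear map
from the conormal module to the torsion-free module `O ⧸ g`; it kills torsion classes, so the
first `t` generators lie in the primitive ideal.
-/

section RegularSequence

variable {A : Type*} [CommRing A] {ys : List A}

theorem inf_ofList_smul_top_le {M : Type*} [AddCommGroup M] [Module A M] (N : Submodule A M)
    (hys : RingTheory.Sequence.IsWeaklyRegular (M ⧸ N) ys) :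
    N ⊓ ofList ys • (⊤ : Submodule A M) ≤ ofList ys • N := by
  rintro x ⟨hxN, hx⟩
  -- `0 → N → M → M ⧸ N → 0` stays exact modulo a sequence that is weakly regular on `M ⧸ N`.
  have hexact := RingTheory.Sequence.map_first_exact_on_four_term_right_exact_of_isSMulRegular_last
    (f₁ := (0 : PUnit →ₗ[A] N)) ((LinearMap.exact_zero_iff_injective _ _).2 N.injective_subtype)
    (LinearMap.exact_subtype_mkQ N) N.mkQ_surjective hys
  obtain ⟨y, hy⟩ := (hexact (Submodule.Quotient.mk ⟨x, hxN⟩)).1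
    ((Submodule.Quotient.mk_eq_zero _).2 hx)
  obtain ⟨y, rfl⟩ := Submodule.Quotient.mk_surjective _ y
  exact (Submodule.mem_smul_top_iff _ N ⟨x, hxN⟩).1 ((Submodule.Quotient.mk_eq_zero _).1 hy.symm)

theorem inf_sup_ofList_sq_le_mul (I : Ideal A)
    (hys : RingTheory.Sequence.IsWeaklyRegular (A ⧸ I) ys) :
    I ⊓ (I ⊔ ofList ys) ^ 2 ≤ (I ⊔ ofList ys) * I := by
  have hsq : (I ⊔ ofList ys) ^ 2 ≤ ofList ys ⊔ (I ⊔ ofList ys) * I := by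
    rw [sq, Ideal.mul_sup, sup_comm]
    exact sup_le_sup_right mul_le_right _
  calc I ⊓ (I ⊔ ofList ys) ^ 2
    _ ≤ I ⊓ (ofList ys ⊔ (I ⊔ ofList ys) * I) := inf_le_inf_left I hsq
    _ = I ⊓ ofList ys • ⊤ ⊔ (I ⊔ ofList ys) * I := by
      rw [← inf_sup_assoc_of_le _ mul_le_right, smul_eq_mul, mul_top]
    _ ≤ (I ⊔ ofList ys) * I :=
      sup_le ((inf_ofList_smul_top_le I hys).trans (mul_mono_left le_sup_right)) le_rfl

end RegularSequence

section CotangentSpace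

open IsLocalRing

variable {S : Type*} [CommRing S] [IsLocalRing S] [IsNoetherianRing S] {r : ℕ}

theorem linearIndependent_toCotangent_of_isRegular {y : Fin r → maximalIdeal S}
    (hy : RingTheory.Sequence.IsRegular S (List.ofFn fun i => (y i : S)))
    (hspan : Submodule.span S (Set.range y) = ⊤) :
    LinearIndependent (ResidueField S) fun i => (maximalIdeal S).toCotangent (y i) := by
  refine linearIndependent_of_top_le_span_of_card_le_finrank (top_le_iff.2 ?_) ?_
  · change Submodule.span _ (Set.range ((maximalIdeal S).toCotangent ∘ y)) = ⊤
    rw [Set.range_comp, CotangentSpace.span_image_eq_top_iff, hspan]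
  · set ys := List.ofFn fun i => (y i : S)
    have : Nontrivial (S ⧸ ofList ys) := Ideal.Quotient.nontrivial_iff.2 fun h =>
      hy.top_ne_smul (by rw [h, smul_eq_mul, top_mul])
    rw [Fintype.card_fin, ← spanFinrank_maximalIdeal_eq_finrank_cotangentSpace,
      ← Nat.cast_le (α := WithBot ℕ∞)]
    calc (r : WithBot ℕ∞)
      _ ≤ ringKrullDim (S ⧸ ofList ys) + ys.length := by
        rw [List.length_ofFn]
        exact le_add_of_nonneg_left ringKrullDim_nonneg_of_nontrivial
      _ = ringKrullDim S := ringKrullDim_add_length_eq_ringKrullDim_of_isRegular _ hy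
      _ ≤ (maximalIdeal S).spanFinrank := ringKrullDim_le_spanFinrank_maximalIdeal S

theorem mem_maximalIdeal_of_sum_mul_mem_sq {y : Fin r → S}
    (hy : RingTheory.Sequence.IsRegular S (List.ofFn y))
    (hspan : span (Set.range y) = maximalIdeal S) {a : Fin r → S}
    (ha : ∑ i, a i * y i ∈ maximalIdeal S ^ 2) (j : Fin r) : a j ∈ maximalIdeal S := by
  lift y to Fin r → maximalIdeal S using fun i => hspan ▸ subset_span (Set.mem_range_self i)
  have hspan' : Submodule.span S (Set.range y) = ⊤ := by
    apply Submodule.map_injective_of_injective (maximalIdeal S).injective_subtype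
    rw [Submodule.map_span, ← Set.range_comp, Submodule.map_subtype_top]
    exact hspan
  have hsum : ∑ i, residue S (a i) • (maximalIdeal S).toCotangent (y i) = 0 := calc
    _ = (maximalIdeal S).toCotangent (∑ i, a i • y i) := by
      simp only [map_sum, map_smul]
      rfl
    _ = 0 := (toCotangent_eq_zero _ _).2 (by simpa using ha)
  exact (residue_eq_zero_iff _).1 <| Fintype.linearIndependent_iff.1
    (linearIndependent_toCotangent_of_isRegular hy hspan') _ hsum j

end CotangentSpace

section FormallySmooth

open IsLocalRing
open scoped TensorProduct

theorem mem_ker_sq_of_one_tmul_D_eq_zero {R P S : Type*} [CommRing R] [CommRing P] [CommRing S]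
    [Algebra R P] [Algebra R S] [Algebra P S] [IsScalarTower R P S]
    [Algebra.FormallySmooth R P] [Algebra.FormallySmooth R S]
    (hsurj : Function.Surjective (algebraMap P S)) {x : P}
    (hx : x ∈ RingHom.ker (algebraMap P S))
    (hDx : (1 ⊗ₜ KaehlerDifferential.D R P x : S ⊗[P] Ω[P⁄R]) = 0) :
    x ∈ RingHom.ker (algebraMap P S) ^ 2 := by
  have hinj : Function.Injective (KaehlerDifferential.kerCotangentToTensor R P S) :=
    (Algebra.FormallySmooth.kerCotangentToTensor_injective_iff hsurj).2 inferInstance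
  refine (toCotangent_eq_zero _ ⟨x, hx⟩).1 (hinj ?_)
  rw [map_zero]
  exact hDx

theorem one_tmul_eq_zero_of_mem_ker_smul_top {A B M : Type*} [CommRing A] [CommRing B]
    [Algebra A B] [AddCommGroup M] [Module A M] {x : M}
    (hx : x ∈ RingHom.ker (algebraMap A B) • (⊤ : Submodule A M)) : (1 ⊗ₜ x : B ⊗[A] M) = 0 := by
  refine Submodule.smul_induction_on hx (fun r hr m _ => ?_) fun x y hx hy => ?_
  · rw [← TensorProduct.smul_tmul, Algebra.smul_def, RingHom.mem_ker.1 hr, zero_mul,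
      TensorProduct.zero_tmul]
  · rw [TensorProduct.tmul_add, hx, hy, add_zero]

theorem formallySmooth_of_isWeaklyRegular_of_surjective {k A S : Type*} [CommRing k] [CommRing A]
    [IsLocalRing A] [IsNoetherianRing A] [CommRing S] [IsLocalRing S] [Algebra k A] [Algebra k S]
    [Algebra A S] [IsScalarTower k A S] [Algebra.FormallySmooth k A] [Module.Finite A Ω[A⁄k]]
    [Algebra.FormallySmooth k (ResidueField S)] (hsurj : Function.Surjective (algebraMap A S))
    {ys : List S} (hys : RingTheory.Sequence.IsWeaklyRegular S ys)
    (hspan : ofList ys = maximalIdeal S) : Algebra.FormallySmooth k S := by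
  obtain ⟨ys, rfl⟩ := List.map_surjective_iff.2 hsurj ys
  rw [← map_ofList] at hspan
  rw [RingTheory.Sequence.isWeaklyRegular_map_algebraMap_iff] at hys
  let κ := ResidueField S
  let I := RingHom.ker (algebraMap A S)
  have : Module.Free A Ω[A⁄k] := Module.free_of_flat_of_isLocalRing
  have hκ : Function.Surjective (algebraMap A κ) := by
    rw [IsScalarTower.algebraMap_eq A S κ]
    exact residue_surjective.comp hsurj
  have hker : RingHom.ker (algebraMap A κ) = I ⊔ ofList ys := by
    rw [IsScalarTower.algebraMap_eq A S κ, ← RingHom.comap_ker, ResidueField.algebraMap_eq,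
      ker_residue, ← hspan, comap_map_of_surjective' _ hsurj, sup_comm]
  have hys' : RingTheory.Sequence.IsWeaklyRegular (A ⧸ I) ys :=
    ((quotientKerAlgEquivOfSurjective (f := Algebra.ofId A S) hsurj).toLinearEquiv
      |>.isWeaklyRegular_congr ys).2 hys
  rw [Algebra.FormallySmooth.iff_injective_cotangentComplexBaseChange_residueField A hsurj
    (IsNoetherian.noetherian _), injective_iff_map_eq_zero]
  intro z hz
  obtain ⟨x, rfl⟩ := TensorProduct.mk_surjective A I κ hκ z
  rw [TensorProduct.mk_apply, KaehlerDifferential.cotangentComplexBaseChange_tmul, one_smul] at hz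
  have hxsq : x.1 ∈ RingHom.ker (algebraMap A κ) ^ 2 :=
    mem_ker_sq_of_one_tmul_D_eq_zero (R := k) hκ (hker ▸ mem_sup_left x.2) hz
  have hxI : x.1 ∈ RingHom.ker (algebraMap A κ) * I := by
    rw [hker] at hxsq ⊢
    exact inf_sup_ofList_sq_le_mul I hys' ⟨x.2, hxsq⟩
  exact one_tmul_eq_zero_of_mem_ker_smul_top ((Submodule.mem_smul_top_iff _ I x).2 hxI)

theorem formallySmooth_localization_of_isWeaklyRegular {k O R : Type*} [Field k] [PerfectField k]
    [CommRing O] [Algebra k O] [Algebra.FormallySmooth k O] [Algebra.EssFiniteType k O]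
    [CommRing R] [Algebra k R] [Algebra O R] [IsScalarTower k O R]
    (hsurj : Function.Surjective (algebraMap O R)) (q : Ideal R) [q.IsPrime]
    {ys : List (Localization.AtPrime q)}
    (hys : RingTheory.Sequence.IsWeaklyRegular (Localization.AtPrime q) ys)
    (hspan : ofList ys = maximalIdeal (Localization.AtPrime q)) :
    Algebra.FormallySmooth k (Localization.AtPrime q) := by
  let A := Localization.AtPrime (q.under O)
  let S := Localization.AtPrime q
  let : Algebra A S := Localization.AtPrime.algebraOfLiesOver (q.under O) q
  have hAS : Function.Surjective (algebraMap A S) :=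
    (RingHom.surjectiveOnStalks_of_surjective hsurj).localRingHom_surjective _ q rfl
  have : Algebra.FormallySmooth k A := .comp k O A
  have : Algebra.EssFiniteType k A := .comp k O A
  have : IsNoetherianRing A := Algebra.EssFiniteType.isNoetherianRing k A
  have : Algebra.FiniteType A S := .of_surjective (Algebra.ofId A S) hAS
  have : Algebra.EssFiniteType k S := .comp k A S
  have : Algebra.EssFiniteType k (ResidueField S) := .comp k S _
  exact formallySmooth_of_isWeaklyRegular_of_surjective hAS hys hspan

end FormallySmooth

section Derivation

open IsLocalRing
open scoped TensorProduct

theorem exists_compDer_eq_of_surjective {k O M N : Type*} [CommRing k] [CommRing O] [Algebra k O]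
    [Module.Projective O Ω[O⁄k]] [AddCommGroup M] [Module k M] [Module O M]
    [IsScalarTower k O M] [AddCommGroup N] [Module k N] [Module O N] [IsScalarTower k O N]
    {f : M →ₗ[O] N} (hf : Function.Surjective f) (d : Derivation k O N) :
    ∃ D : Derivation k O M, f.compDer D = d := by
  obtain ⟨l, hl⟩ := Module.projective_lifting_property f d.liftKaehlerDifferential hf
  refine ⟨l.compDer (KaehlerDifferential.D k O), Derivation.ext fun x => ?_⟩
  exact (LinearMap.congr_fun hl (KaehlerDifferential.D k O x)).trans
    (d.liftKaehlerDifferential_comp_D x)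

theorem exists_derivation_apply_notMem_maximalIdeal {k S : Type*} [CommRing k] [CommRing S]
    [IsLocalRing S] [Algebra k S] [Algebra.FormallySmooth k S]
    [Algebra.FormallySmooth k (ResidueField S)] {x : S} (hx : x ∈ maximalIdeal S)
    (hxsq : x ∉ maximalIdeal S ^ 2) : ∃ D : Derivation k S S, D x ∉ maximalIdeal S := by
  let κ := ResidueField S
  have hker : RingHom.ker (algebraMap S κ) = maximalIdeal S := ker_residue
  have hDx : (1 ⊗ₜ KaehlerDifferential.D k S x : κ ⊗[S] Ω[S⁄k]) ≠ 0 := fun hDx =>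
    hxsq (hker ▸ mem_ker_sq_of_one_tmul_D_eq_zero residue_surjective (hker ▸ hx) hDx)
  obtain ⟨φ, hφ⟩ := not_forall.1 (mt (Module.forall_dual_apply_eq_zero_iff κ _).1 hDx)
  let l : Ω[S⁄k] →ₗ[S] κ := φ.restrictScalars S ∘ₗ TensorProduct.mk S κ Ω[S⁄k] 1
  obtain ⟨D, hD⟩ := exists_compDer_eq_of_surjective (f := Algebra.linearMap S κ)
    residue_surjective (l.compDer (KaehlerDifferential.D k S))
  refine ⟨D, fun hDx => hφ ?_⟩
  calc _ = residue S (D x) := (Derivation.congr_fun hD x).symm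
    _ = 0 := (residue_eq_zero_iff _).2 hDx

theorem exists_derivation_algebraMap_eq_smul {k R S : Type*} [CommRing k] [CommRing R]
    [CommRing S] [Algebra k R] [Algebra k S] [Algebra R S] [IsScalarTower k R S]
    [Module.FinitePresentation R Ω[R⁄k]] (M : Submonoid R) [IsLocalization M S]
    (D : Derivation k S S) :
    ∃ (δ : Derivation k R R) (s : M), ∀ x, algebraMap R S (δ x) = s • D (algebraMap R S x) := by
  obtain ⟨l, s, hl⟩ := Module.FinitePresentation.exists_lift_of_isLocalizedModule M
    (Algebra.linearMap R S) (D.compAlgebraMap R).liftKaehlerDifferential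
  refine ⟨l.compDer (KaehlerDifferential.D k R), s, fun x => ?_⟩
  calc _ = s • (D.compAlgebraMap R).liftKaehlerDifferential (KaehlerDifferential.D k R x) :=
        LinearMap.congr_fun hl _
    _ = _ := by rw [Derivation.liftKaehlerDifferential_comp_D]; rfl

theorem exists_preservesIdeal_apply_notMem {k O : Type*} [CommRing k] [CommRing O] [Algebra k O]
    [Module.Projective O Ω[O⁄k]] (h : Ideal O) [Module.FinitePresentation (O ⧸ h) Ω[(O ⧸ h)⁄k]]
    {q : Ideal (O ⧸ h)} [q.IsPrime] [Algebra.FormallySmooth k (Localization.AtPrime q)]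
    [Algebra.FormallySmooth k q.ResidueField] {x : O} (hx : Ideal.Quotient.mk h x ∈ q)
    (hxsq : algebraMap (O ⧸ h) (Localization.AtPrime q) (Ideal.Quotient.mk h x) ∉
      maximalIdeal (Localization.AtPrime q) ^ 2) :
    ∃ ξ : Derivation k O O, PreservesIdeal h ξ ∧ Ideal.Quotient.mk h (ξ x) ∉ q := by
  let S := Localization.AtPrime q
  have hmem (y : O ⧸ h) : algebraMap _ S y ∈ maximalIdeal S ↔ y ∈ q :=
    IsLocalization.AtPrime.to_map_mem_maximal_iff S q y
  obtain ⟨D, hD⟩ := exists_derivation_apply_notMem_maximalIdeal (k := k) ((hmem _).2 hx) hxsq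
  obtain ⟨δ, s, hδ⟩ := exists_derivation_algebraMap_eq_smul q.primeCompl D
  obtain ⟨ξ, hξ⟩ := exists_compDer_eq_of_surjective (f := Algebra.linearMap O (O ⧸ h))
    Ideal.Quotient.mk_surjective (δ.compAlgebraMap O)
  have hξδ (y : O) : Ideal.Quotient.mk h (ξ y) = δ (Ideal.Quotient.mk h y) :=
    Derivation.congr_fun hξ y
  refine ⟨ξ, fun y hy => ?_, ?_⟩
  · rw [← Ideal.Quotient.eq_zero_iff_mem, hξδ, Ideal.Quotient.eq_zero_iff_mem.2 hy, map_zero]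
  · rw [hξδ, ← hmem, hδ, Submonoid.smul_def, Algebra.smul_def]
    exact (unit_mul_mem_iff_mem _ (IsLocalization.map_units S s)).not.2 hD

theorem mem_of_forall_preservesIdeal_sum_mem {k O : Type*} [Field k] [PerfectField k]
    [CommRing O] [Algebra k O] [Algebra.FormallySmooth k O] [Algebra.EssFiniteType k O]
    (h : Ideal O) (q : Ideal (O ⧸ h)) [q.IsPrime] {r : ℕ} {y : Fin r → O}
    (hy : RingTheory.Sequence.IsRegular (Localization.AtPrime q) (List.ofFn fun i =>
      algebraMap (O ⧸ h) (Localization.AtPrime q) (Ideal.Quotient.mk h (y i))))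
    (hspan : span (Set.range fun i =>
      algebraMap (O ⧸ h) (Localization.AtPrime q) (Ideal.Quotient.mk h (y i))) =
        maximalIdeal (Localization.AtPrime q))
    {a : Fin r → O} (ha : ∀ ξ : Derivation k O O, PreservesIdeal h ξ →
      Ideal.Quotient.mk h (ξ (∑ i, a i * y i)) ∈ q) (j : Fin r) :
    Ideal.Quotient.mk h (a j) ∈ q := by
  let R := O ⧸ h
  let S := Localization.AtPrime q
  have : Algebra.EssFiniteType k R := .comp k O R
  have : Algebra.EssFiniteType k S := .comp k R S
  have : Algebra.EssFiniteType k q.ResidueField := .comp k S _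
  have : IsNoetherianRing R := Algebra.EssFiniteType.isNoetherianRing k R
  have : IsNoetherianRing S := Algebra.EssFiniteType.isNoetherianRing k S
  have : Module.FinitePresentation R Ω[R⁄k] := Module.finitePresentation_of_finite R _
  have : Algebra.FormallySmooth k S :=
    formallySmooth_localization_of_isWeaklyRegular (O := O) Ideal.Quotient.mk_surjective q
      hy.toIsWeaklyRegular (by simp [← hspan, ofList, Set.range])
  have hmem (x : R) : algebraMap R S x ∈ maximalIdeal S ↔ x ∈ q :=
    IsLocalization.AtPrime.to_map_mem_maximal_iff S q x
  have hsum : algebraMap R S (Ideal.Quotient.mk h (∑ i, a i * y i)) ∈ maximalIdeal S ^ 2 := by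
    by_contra hsum
    have hsumq : Ideal.Quotient.mk h (∑ i, a i * y i) ∈ q := by
      simp only [map_sum, map_mul]
      exact sum_mem fun i _ => mul_mem_left _ _ <|
        (hmem _).1 (hspan ▸ subset_span (Set.mem_range_self i))
    obtain ⟨ξ, hξ, hξq⟩ := exists_preservesIdeal_apply_notMem (k := k) h hsumq hsum
    exact hξq (ha ξ hξ)
  simp only [map_sum, map_mul] at hsum
  exact (hmem _).1 (mem_maximalIdeal_of_sum_mul_mem_sq hy hspan hsum j)

end Derivation

section PrimitiveIdeal

theorem map_algebraMap_eq_maximalIdeal_of_mem_minimalPrimes {A : Type*} [CommRing A]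
    (B : Type*) [CommRing B] [Algebra A B] [IsLocalRing B] (g p : Ideal A) [p.IsPrime]
    [IsLocalization.AtPrime B p] (hrad : g.IsRadical) (hp : p ∈ g.minimalPrimes) :
    g.map (algebraMap A B) = IsLocalRing.maximalIdeal B := by
  rw [← IsLocalization.AtPrime.map_eq_maximalIdeal p B,
    ← IsLocalization.AtPrime.radical_map_of_mem_minimalPrimes B p g hp,
    ← IsLocalization.map_radical p.primeCompl, hrad.radical]

theorem derivation_apply_mem_of_mem_sq {k O : Type*} [CommRing k] [CommRing O] [Algebra k O]
    (ξ : Derivation k O O) {I : Ideal O} {x : O} (hx : x ∈ I ^ 2) : ξ x ∈ I := by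
  rw [sq] at hx
  induction hx using Submodule.mul_induction_on' with
  | mem_mul_mem a ha b hb =>
    rw [Derivation.leibniz]
    exact add_mem (mul_mem_right _ _ ha) (mul_mem_right _ _ hb)
  | add x _ y _ hx hy =>
    rw [map_add]
    exact add_mem hx hy

theorem sq_le_primitiveIdeal (k : Type*) {O : Type*} [CommRing k] [CommRing O] [Algebra k O]
    (h g : Ideal O) : g ^ 2 ≤ primitiveIdeal k h g := fun _ hx =>
  ⟨pow_le_self two_ne_zero hx, fun ξ _ => derivation_apply_mem_of_mem_sq ξ hx⟩

theorem torsionSet_subset_primitiveIdeal (k : Type*) {O : Type*} [CommRing k] [CommRing O]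
    [Algebra k O] {h g : Ideal O} (hle : h ≤ g) : torsionSet h g ⊆ primitiveIdeal k h g := by
  rintro f ⟨hfg, β, hβ, hβf⟩
  refine ⟨hfg, fun ξ hξ => ?_⟩
  have hξβf : ξ (β * f) ∈ g := by
    obtain ⟨x, hx, y, hy, hxy⟩ := Submodule.mem_sup.1 hβf
    rw [← hxy, map_add]
    exact add_mem (derivation_apply_mem_of_mem_sq ξ hx) (hle (hξ y hy))
  have hβξf : β * ξ f ∈ g := by
    rw [Derivation.leibniz, smul_eq_mul, smul_eq_mul] at hξβf
    exact (g.add_mem_iff_left (mul_mem_right (ξ β) _ hfg)).1 hξβf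
  rw [← Ideal.Quotient.eq_zero_iff_mem] at hβξf ⊢
  rwa [map_mul, mul_left_mem_nonZeroDivisors_eq_zero_iff hβ] at hβξf

theorem span_range_eq_sup_tailFam {O : Type*} [CommRing O] {n t : ℕ} (htn : t ≤ n)
    (gs : Fin n → O) : span (Set.range gs) =
      span (Set.range fun j : Fin t => gs (Fin.castLE htn j)) ⊔
        span (Set.range (tailFam gs t)) := by
  rw [← span_union]
  congr 1
  ext x
  constructor
  · rintro ⟨i, rfl⟩
    rcases lt_or_ge (i : ℕ) t with hi | hi
    · exact Or.inl ⟨⟨i, hi⟩, rfl⟩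
    · exact Or.inr ⟨⟨i - t, by omega⟩, by simp [tailFam, Nat.add_sub_cancel' hi]⟩
  · rintro (⟨j, rfl⟩ | ⟨j, rfl⟩)
    exacts [⟨_, rfl⟩, ⟨_, rfl⟩]

variable {k O : Type*} [Field k] [PerfectField k] [CommRing O] [Algebra k O]
  [Algebra.FormallySmooth k O] [Algebra.EssFiniteType k O]

theorem mem_of_generatesAsCI_of_forall_preservesIdeal {h g p : Ideal O} (hle : h ≤ g)
    (hrad : g.IsRadical) (hp : p ∈ g.minimalPrimes) {n : ℕ} {gs : Fin n → O} {t : ℕ}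
    (hci : generatesAsCI h g gs t p) {a : Fin (n - t) → O}
    (ha : ∀ ξ : Derivation k O O, PreservesIdeal h ξ → ξ (∑ j, a j * tailFam gs t j) ∈ p)
    (j : Fin (n - t)) : a j ∈ p := by
  have hpp : p.IsPrime := hp.1.1
  have hhp : h ≤ p := hle.trans hp.1.2
  have hmk : Function.Surjective (Ideal.Quotient.mk h) := Ideal.Quotient.mk_surjective
  have hker : RingHom.ker (Ideal.Quotient.mk h) ≤ g := mk_ker.trans_le hle
  have hq : (p.map (Ideal.Quotient.mk h)).IsPrime :=
    map_isPrime_of_surjective hmk (hker.trans hp.1.2)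
  have hqmin : p.map (Ideal.Quotient.mk h) ∈ (g.map (Ideal.Quotient.mk h)).minimalPrimes := by
    rw [minimalPrimes_map_of_surjective hmk, sup_eq_left.2 hker]
    exact ⟨p, hp, rfl⟩
  have hgrad : (g.map (Ideal.Quotient.mk h)).IsRadical := by
    rw [← radical_eq_iff, ← map_radical_of_surjective hmk hker, hrad.radical]
  obtain ⟨hreg, hspan⟩ := hci hq
  rw [map_algebraMap_eq_maximalIdeal_of_mem_minimalPrimes _ _ _ hgrad hqmin] at hspan
  rw [← mem_quotient_iff_mem hhp]
  exact mem_of_forall_preservesIdeal_sum_mem h _ hreg hspan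
    (fun ξ hξ => (mem_quotient_iff_mem hhp).2 (ha ξ hξ)) j

theorem mem_of_sum_mul_tailFam_mem_primitiveIdeal {h g : Ideal O} (hle : h ≤ g)
    (hrad : g.IsRadical) {n : ℕ} {gs : Fin n → O} {t : ℕ}
    (hci : ∀ p ∈ associatedPrimes O (O ⧸ g), generatesAsCI h g gs t p) {a : Fin (n - t) → O}
    (ha : ∑ j, a j * tailFam gs t j ∈ primitiveIdeal k h g) (j : Fin (n - t)) : a j ∈ g := by
  have : IsNoetherianRing O := Algebra.EssFiniteType.isNoetherianRing k O
  rw [← hrad.radical, ← sInf_minimalPrimes, Submodule.mem_sInf]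
  intro p hp
  have hpass : p ∈ associatedPrimes O (O ⧸ g) :=
    Module.associatedPrimes.minimalPrimes_annihilator_subset_associatedPrimes _ _
      (by rwa [annihilator_quotient])
  exact mem_of_generatesAsCI_of_forall_preservesIdeal (k := k) hle hrad hp (hci p hpass)
    (fun ξ hξ => hp.1.2 (ha.2 ξ hξ)) j

theorem statement7_general (h g : Ideal O) (hle : h ≤ g) (hrad : g.IsRadical)
    {n : ℕ} (gs : Fin n → O) (hgen : g = span (Set.range gs)) (t : ℕ) (htn : t ≤ n)
    (h1 : ∀ i : Fin n, (i : ℕ) < t → gs i ∈ torsionSet h g)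
    (h2 : ∀ p ∈ associatedPrimes O (O ⧸ g), generatesAsCI h g gs t p) :
    primitiveIdeal k h g =
      span (Set.range fun j : Fin t => gs (Fin.castLE htn j)) ⊔
        (span (Set.range (tailFam gs t))) ^ 2 := by
  have hsup : g = _ := hgen.trans (span_range_eq_sup_tailFam htn gs)
  set G₁ := span (Set.range fun j : Fin t => gs (Fin.castLE htn j))
  set G₂ := span (Set.range (tailFam gs t))
  have hG₁ : G₁ ≤ primitiveIdeal k h g := span_le.2 <|
    Set.range_subset_iff.2 fun j => torsionSet_subset_primitiveIdeal k hle (h1 _ j.2)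
  have hG₂ : G₂ ^ 2 ≤ primitiveIdeal k h g :=
    (pow_right_mono (hsup ▸ le_sup_right) 2).trans (sq_le_primitiveIdeal k h g)
  have hmul : g * G₂ ≤ G₁ ⊔ G₂ ^ 2 := by
    rw [hsup, Ideal.sup_mul, sq]
    exact sup_le_sup_right mul_le_left _
  refine le_antisymm (fun f hf => ?_) (sup_le hG₁ hG₂)
  obtain ⟨f₁, hf₁, f₂, hf₂, rfl⟩ := Submodule.mem_sup.1 (hsup.le hf.1)
  have hf₂' : f₂ ∈ primitiveIdeal k h g := (Ideal.add_mem_iff_right _ (hG₁ hf₁)).1 hf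
  obtain ⟨a, rfl⟩ := mem_span_range_iff_exists_fun.1 hf₂
  have ha := mem_of_sum_mul_tailFam_mem_primitiveIdeal hle hrad h2 hf₂'
  exact add_mem (mem_sup_left hf₁) <| hmul <|
    sum_mem fun j _ => mul_mem_mul (ha j) (subset_span (Set.mem_range_self j))

end PrimitiveIdeal

/-- Under the conditions of Proposition `basic`, the primitive ideal is
`∫_h g = (g₁, …, g_t) + (g_{t+1}, …, gₙ)²`. -/
theorem statement7 {k : Type*} [Field k] [CharZero k] {m : ℕ}
    (h g : Ideal (MvPolynomial (Fin m) k)) (hle : h ≤ g)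
    (hh : IsUnmixed h) (hrad : g.IsRadical)
    {n : ℕ} (gs : Fin n → MvPolynomial (Fin m) k)
    (hregseq : RingTheory.Sequence.IsRegular (MvPolynomial (Fin m) k) (List.ofFn gs))
    (hgen : g = Ideal.span (Set.range gs))
    (hreg : ∀ p ∈ g.minimalPrimes, regularAtImage h p)
    (t : ℕ) (htn : t ≤ n)
    (h1 : ∀ i : Fin n, (i : ℕ) < t → gs i ∈ torsionSet h g)
    (h2 : ∀ p ∈ associatedPrimes (MvPolynomial (Fin m) k) (MvPolynomial (Fin m) k ⧸ g),
      generatesAsCI h g gs t p) :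
    primitiveIdeal k h g =
      Ideal.span (Set.range fun j : Fin t => gs (Fin.castLE htn j)) ⊔
        (Ideal.span (Set.range (tailFam gs t))) ^ 2 :=
  statement7_general h g hle hrad gs hgen t htn h1 h2
end

section
/- Let 𝒪 be a commutative noetherian ring, 𝔥 ⊆ 𝔤 ideals with 𝔤 a radical ideal generated by an 𝒪-regular sequence g₁,…,g_n and 𝔥 minimally generated by h₁,…,h_p. Suppose there are an integer 0 ≤ t ≤ n and elements β₁,…,β_t of 𝒪 whose images in 𝒪/𝔤 are non-zerodivisors such that β_i g_i ∈ 𝔤² + 𝔥 for i = 1,…,t. Write β_i g_i ≡ Σ_{k=1}^p a_{ik} h_k mod 𝔤² and h_k = Σ_{j=1}^n b_{kj} g_j, and let C₁ = (Σ_k a_{ik} b_{kj})_{1≤i,j≤t}. Then the determinant of the image of C₁ in 𝒪/𝔤 equals β̄₁⋯β̄_t, a non-zerodivisor of 𝒪/𝔤; consequently the p×t matrix B₁ = (b_{kj})_{1≤k≤p, 1≤j≤t} has rank at least t over 𝒪/𝔤, and t ≤ p. -/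
open Ideal

/-!
The classes of a regular sequence `g₁, …, gₙ` generating `I` are a basis of `I / I²` over `O / I`:
the coefficients of a relation among the `gⱼ` lie in `I`, by induction on `n`.
Comparing coordinates in this basis, the congruences `βᵢ gᵢ ≡ ∑ aᵢₖ bₖⱼ gⱼ` mod `I²` say that
`A B₁` is the diagonal matrix of the `βᵢ` over `O / I`. Its determinant is a non-zero-divisor, so it
has rank `t`, which bounds the rank of the factor `B₁` from below.
-/

theorem mem_span_range_smul_iff_exists_fun {R M ι : Type*} [CommSemiring R]
    [AddCommMonoid M] [Module R M] [Fintype ι] {r : ι → R} {N : Submodule R M} {x : M} :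
    x ∈ span (Set.range r) • N ↔ ∃ d : ι → M, (∀ i, d i ∈ N) ∧ ∑ i, r i • d i = x := by
  constructor
  · intro hx
    induction hx using Submodule.smul_induction_on' with
    | smul s hs y hy =>
      obtain ⟨c, rfl⟩ := Ideal.mem_span_range_iff_exists_fun.mp hs
      refine ⟨fun i => c i • y, fun i => N.smul_mem _ hy, ?_⟩
      simp only [Finset.sum_smul, smul_smul, mul_comm]
    | add y _ z _ hy hz =>
      obtain ⟨d, hd, rfl⟩ := hy
      obtain ⟨d', hd', rfl⟩ := hz
      exact ⟨d + d', fun i => N.add_mem (hd i) (hd' i), by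
        simp only [Pi.add_apply, smul_add, Finset.sum_add_distrib]⟩
  · rintro ⟨d, hd, rfl⟩
    exact sum_mem fun i _ => Submodule.smul_mem_smul (subset_span (Set.mem_range_self i)) (hd i)

theorem ofList_ofFn {R : Type*} [Semiring R] {n : ℕ} (r : Fin n → R) :
    ofList (List.ofFn r) = span (Set.range r) := by
  simp only [ofList, List.mem_ofFn', Set.ofPred_mem_eq]

section RegularSequence

open RingTheory.Sequence

variable {R M : Type*} [CommRing R] [AddCommGroup M] [Module R M]

theorem isWeaklyRegular_ofFn_succ_iff {n : ℕ} (r : Fin (n + 1) → R) :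
    IsWeaklyRegular M (List.ofFn r) ↔
      IsWeaklyRegular M (List.ofFn (Fin.init r)) ∧
        ∀ x : M, r (Fin.last n) • x ∈ span (Set.range (Fin.init r)) • (⊤ : Submodule R M) →
          x ∈ span (Set.range (Fin.init r)) • (⊤ : Submodule R M) := by
  rw [List.ofFn_succ', List.concat_eq_append, isWeaklyRegular_append_iff,
    isWeaklyRegular_singleton_iff, isSMulRegular_quotient_iff_mem_of_smul_mem, ← ofList_ofFn]
  rfl

theorem mem_span_smul_top_of_sum_smul_eq_zero {n : ℕ} {r : Fin n → R}
    (hr : IsWeaklyRegular M (List.ofFn r)) {c : Fin n → M} (hc : ∑ j, r j • c j = 0)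
    (j : Fin n) : c j ∈ span (Set.range r) • (⊤ : Submodule R M) := by
  induction n with
  | zero => exact j.elim0
  | succ n ih =>
    obtain ⟨hinit, hlast⟩ := (isWeaklyRegular_ofFn_succ_iff r).mp hr
    have hle : span (Set.range (Fin.init r)) • (⊤ : Submodule R M) ≤ span (Set.range r) • ⊤ :=
      Submodule.smul_mono_left (span_mono (Set.range_comp_subset_range Fin.castSucc r))
    rw [Fin.sum_univ_castSucc] at hc
    have hclast : c (Fin.last n) ∈ span (Set.range (Fin.init r)) • (⊤ : Submodule R M) := by
      refine hlast _ (mem_span_range_smul_iff_exists_fun.mpr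
        ⟨fun i => -c i.castSucc, fun _ => Submodule.mem_top, ?_⟩)
      simpa only [Fin.init, smul_neg, Finset.sum_neg_distrib] using neg_eq_of_add_eq_zero_right hc
    obtain ⟨d, -, hd⟩ := mem_span_range_smul_iff_exists_fun.mp hclast
    -- Substituting `hd` for the last coefficient leaves a relation among the first `n` terms.
    have hrel : ∑ i, Fin.init r i • (c i.castSucc + r (Fin.last n) • d i) = 0 := by
      simp only [smul_add, smul_comm _ (r (Fin.last n)), Finset.sum_add_distrib,
        ← Finset.smul_sum, hd]
      exact hc
    refine Fin.lastCases (hle hclast) (fun i => ?_) j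
    exact (Submodule.add_mem_iff_left _ (Submodule.smul_mem_smul
      (subset_span (Set.mem_range_self (Fin.last n))) Submodule.mem_top)).mp
        (hle (ih hinit hrel i))

theorem mem_span_smul_top_of_sum_smul_mem_sq {n : ℕ} {r : Fin n → R}
    (hr : IsWeaklyRegular M (List.ofFn r)) {c : Fin n → M}
    (hc : ∑ j, r j • c j ∈ span (Set.range r) ^ 2 • (⊤ : Submodule R M)) (j : Fin n) :
    c j ∈ span (Set.range r) • (⊤ : Submodule R M) := by
  rw [pow_two, Submodule.mul_smul] at hc
  obtain ⟨d, hd, hsum⟩ := mem_span_range_smul_iff_exists_fun.mp hc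
  have hrel : ∑ i, r i • (c i - d i) = 0 := by
    simp only [smul_sub, Finset.sum_sub_distrib, hsum, sub_self]
  exact (Submodule.sub_mem_iff_left _ (hd j)).mp (mem_span_smul_top_of_sum_smul_eq_zero hr hrel j)

theorem linearIndependent_toCotangent_of_isWeaklyRegular {n : ℕ} {r : Fin n → R}
    (hr : IsWeaklyRegular R (List.ofFn r)) :
    LinearIndependent (R ⧸ span (Set.range r)) fun j =>
      (span (Set.range r)).toCotangent ⟨r j, subset_span (Set.mem_range_self j)⟩ := by
  rw [Fintype.linearIndependent_iff]
  intro c hc j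
  obtain ⟨c, rfl⟩ := Ideal.Quotient.mk_surjective.comp_left c
  have hsq : ∑ i, r i • c i ∈ span (Set.range r) ^ 2 := by
    simp only [Function.comp_apply, ← Ideal.Quotient.algebraMap_eq, algebraMap_smul, ← map_smul,
      ← map_sum, toCotangent_eq_zero] at hc
    simpa [mul_comm] using hc
  refine Ideal.Quotient.eq_zero_iff_mem.mpr ?_
  simpa only [smul_eq_mul, mul_top] using
    mem_span_smul_top_of_sum_smul_mem_sq hr (by simpa only [smul_eq_mul, mul_top] using hsq) j

theorem span_range_ne_top_of_isRegular {n : ℕ} {r : Fin n → R}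
    (hr : IsRegular R (List.ofFn r)) : span (Set.range r) ≠ ⊤ := by
  simpa only [ofList_ofFn, smul_eq_mul, mul_top] using hr.top_ne_smul.symm

end RegularSequence

theorem mul_submatrix_eq_diagonal_of_linearIndependent {S V ι κ l : Type*} [Semiring S]
    [AddCommMonoid V] [Module S V] [DecidableEq ι] [Fintype κ] [Fintype l] {v : κ → V}
    (hv : LinearIndependent S v) {e : ι → κ} (he : e.Injective) {β : ι → S}
    {A : Matrix ι l S} {B : Matrix l κ S}
    (h : ∀ i, β i • v (e i) = ∑ k, A i k • ∑ j, B k j • v j) :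
    A * B.submatrix id e = Matrix.diagonal β := by
  classical
  have hrow (i : ι) : (A * B) i = Pi.single (e i) (β i) := by
    refine funext (Fintype.linearIndependent_iffₛ.mp hv _ _ ?_)
    calc ∑ j, (A * B) i j • v j = ∑ k, A i k • ∑ j, B k j • v j := by
          simp only [Matrix.mul_apply, Finset.sum_smul, Finset.smul_sum, mul_smul]
          exact Finset.sum_comm
      _ = β i • v (e i) := (h i).symm
      _ = ∑ j, (Pi.single (e i) (β i) : κ → S) j • v j := by
          simp only [Pi.single_apply, ite_smul, zero_smul, Finset.sum_ite_eq', Finset.mem_univ,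
            if_true]
  ext i j
  calc (A * B.submatrix id e) i j = (A * B) i (e j) := rfl
    _ = Matrix.diagonal β i j := by
      simp only [hrow, Pi.single_apply, Matrix.diagonal_apply, he.eq_iff, eq_comm]

theorem card_le_rank_of_det_mul_mem_nonZeroDivisors {S ι l : Type*} [CommRing S] [Nontrivial S]
    [Fintype ι] [DecidableEq ι] [Fintype l] {A : Matrix ι l S} {B : Matrix l ι S}
    (hdet : (A * B).det ∈ nonZeroDivisors S) : Fintype.card ι ≤ B.rank :=
  (Matrix.rank_of_det_mem_nonZeroDivisors hdet).symm.trans_le (Matrix.rank_mul_le_right A B)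

theorem map_mk_mul_submatrix_eq_diagonal {R ι κ l : Type*} [CommRing R] [DecidableEq ι]
    [Fintype κ] [Fintype l] {I : Ideal R} {f : κ → I}
    (hf : LinearIndependent (R ⧸ I) fun j => I.toCotangent (f j)) {e : ι → κ}
    (he : e.Injective) {β : ι → R} {x : l → R} {a : Matrix ι l R} {b : Matrix l κ R}
    (ha : ∀ i, β i * f (e i) - ∑ k, a i k * x k ∈ I ^ 2)
    (hb : ∀ k, x k - ∑ j, b k j * f j ∈ I ^ 2) :
    (a * b.submatrix id e).map (Ideal.Quotient.mk I) =
      Matrix.diagonal fun i => Ideal.Quotient.mk I (β i) := by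
  rw [Matrix.map_mul, ← Matrix.submatrix_map]
  refine mul_submatrix_eq_diagonal_of_linearIndependent hf he fun i => ?_
  have hsq : β i * f (e i) - ∑ k, a i k * ∑ j, b k j * f j ∈ I ^ 2 := by
    have hsum := add_mem (ha i) (sum_mem fun k (_ : k ∈ Finset.univ) =>
      (I ^ 2).mul_mem_left (a i k) (hb k))
    simpa only [mul_sub, Finset.sum_sub_distrib, sub_add_sub_cancel] using hsum
  simp only [Matrix.map_apply, ← Ideal.Quotient.algebraMap_eq, algebraMap_smul, ← map_smul,
    ← map_sum, toCotangent_eq]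
  simpa using hsq

theorem statement9_general {R ι κ l : Type*} [CommRing R] [Fintype ι] [DecidableEq ι]
    [Fintype κ] [Fintype l] {I : Ideal R} (hI : I ≠ ⊤) {f : κ → I}
    (hf : LinearIndependent (R ⧸ I) fun j => I.toCotangent (f j)) {e : ι → κ}
    (he : e.Injective) {β : ι → R}
    (hβ : ∀ i, Ideal.Quotient.mk I (β i) ∈ nonZeroDivisors (R ⧸ I)) {x : l → R}
    {a : Matrix ι l R} {b : Matrix l κ R}
    (ha : ∀ i, β i * f (e i) - ∑ k, a i k * x k ∈ I ^ 2)
    (hb : ∀ k, x k - ∑ j, b k j * f j ∈ I ^ 2) :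
    ((a * b.submatrix id e).map (Ideal.Quotient.mk I)).det = Ideal.Quotient.mk I (∏ i, β i) ∧
    Ideal.Quotient.mk I (∏ i, β i) ∈ nonZeroDivisors (R ⧸ I) ∧
    Fintype.card ι ≤ ((b.submatrix id e).map (Ideal.Quotient.mk I)).rank ∧
    Fintype.card ι ≤ Fintype.card l := by
  have : Nontrivial (R ⧸ I) := Ideal.Quotient.nontrivial_iff.mpr hI
  have hdet : ((a * b.submatrix id e).map (Ideal.Quotient.mk I)).det =
      Ideal.Quotient.mk I (∏ i, β i) := by
    rw [map_mk_mul_submatrix_eq_diagonal hf he ha hb, Matrix.det_diagonal, map_prod]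
  have hprod : Ideal.Quotient.mk I (∏ i, β i) ∈ nonZeroDivisors (R ⧸ I) := by
    rw [map_prod]
    exact prod_mem fun i _ => hβ i
  have hrank : Fintype.card ι ≤ ((b.submatrix id e).map (Ideal.Quotient.mk I)).rank := by
    rw [← hdet, Matrix.map_mul] at hprod
    exact card_le_rank_of_det_mul_mem_nonZeroDivisors hprod
  exact ⟨hdet, hprod, hrank, hrank.trans (Matrix.rank_le_card_height _)⟩

/-- The "implicit function theorem" lemma: if `β_i g_i ∈ g² + h` for non-zero-divisors
`β̄_i` of `O/g`, with `β_i g_i ≡ Σ_k a_{ik} h_k mod g²` and `h_k = Σ_j b_{kj} g_j`, then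
`det C̄₁ = β̄₁ ⋯ β̄_t` is a non-zero-divisor in `O/g`, the matrix `B₁` has rank at least
`t` over `O/g`, and `t ≤ p`. -/
theorem statement9 {O : Type*} [CommRing O] [IsNoetherianRing O]
    (h g : Ideal O) (hle : h ≤ g) (hrad : g.IsRadical)
    {n : ℕ} (gs : Fin n → O)
    (hregseq : RingTheory.Sequence.IsRegular O (List.ofFn gs))
    (hgen : g = Ideal.span (Set.range gs))
    {p : ℕ} (hs : Fin p → O) (hhgen : h = Ideal.span (Set.range hs))
    (hmin : ∀ i : Fin p, hs i ∉ Ideal.span (hs '' {j | j ≠ i}))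
    (t : ℕ) (htn : t ≤ n)
    (β : Fin t → O)
    (hβ : ∀ i, Ideal.Quotient.mk g (β i) ∈ nonZeroDivisors (O ⧸ g))
    (hβg : ∀ i : Fin t, β i * gs (Fin.castLE htn i) ∈ g ^ 2 ⊔ h)
    (a : Fin t → Fin p → O)
    (ha : ∀ i : Fin t, β i * gs (Fin.castLE htn i) - ∑ kk, a i kk * hs kk ∈ g ^ 2)
    (b : Fin p → Fin n → O)
    (hb : ∀ kk : Fin p, hs kk = ∑ j, b kk j * gs j) :
    Matrix.det (Matrix.of fun i j : Fin t =>
        Ideal.Quotient.mk g (∑ kk, a i kk * b kk (Fin.castLE htn j))) =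
      Ideal.Quotient.mk g (∏ i, β i) ∧
    Ideal.Quotient.mk g (∏ i, β i) ∈ nonZeroDivisors (O ⧸ g) ∧
    t ≤ Matrix.rank (Matrix.of fun (kk : Fin p) (j : Fin t) =>
        Ideal.Quotient.mk g (b kk (Fin.castLE htn j))) ∧
    t ≤ p := by
  subst hgen
  simpa only [Fintype.card_fin] using! statement9_general (a := a) (b := b)
    (span_range_ne_top_of_isRegular hregseq)
    (linearIndependent_toCotangent_of_isWeaklyRegular hregseq.toIsWeaklyRegular)
    (Fin.castLE_injective htn) hβ ha fun k => by simp [hb]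
end

section
/- Let 𝒪 be a polynomial ring over a field k of characteristic zero and let 𝔥 ⊆ 𝔤 be complete intersection ideals of grades p and n respectively, with 𝔤 radical, generated by an 𝒪-regular sequence g₁,…,g_n, and such that the localization of 𝒪/𝔥 at (the image of) every minimal prime of 𝔤 is a regular local ring. Suppose h₁,…,h_p are generators of 𝔥 with h_i ≡ Σ_{j=1}^t b_{ij} g_j mod 𝔤² for i = 1,…,p, for some 0 ≤ t ≤ n, where b_{ij} ∉ 𝔤 ∖ {0} and for each j the column (b_{1j},…,b_{pj}) is nonzero in (𝒪/𝔤)^p. Then t ≥ p. -/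
open Ideal

/-!
Let `A` be a noetherian local ring with maximal ideal `𝔪`. If `B = A ⧸ I` and `I ≤ J ⊔ 𝔪 ^ 2` with
`J ≤ 𝔪`, then by Nakayama's lemma `𝔪` is generated by lifts of generators of the maximal ideal of
`B` together with generators of `J`. If moreover `B` is regular and `I` is generated by a regular
sequence of length `p`, this produces `dim B + μ(J) = dim A - p + μ(J)` generators, while by Krull's
height theorem there are at least `dim A`; hence `p ≤ μ(J)`. The theorem is the case in which `A` is
the localization of `𝒪` at a minimal prime of `𝔤`, `I` is the extension of `𝔥`, and `J` is generated
by `g₁, …, g_t`.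
-/

open IsLocalRing RingTheory.Sequence

lemma spanFinrank_sup_le {R M : Type*} [Semiring R] [AddCommMonoid M] [Module R M]
    {N P : Submodule R M} (hN : N.FG) (hP : P.FG) :
    (N ⊔ P).spanFinrank ≤ N.spanFinrank + P.spanFinrank := by
  rw [← (hN.sup hP).spanRank_le_iff, Nat.cast_add, ← hN.spanRank_eq_spanFinrank,
    ← hP.spanRank_eq_spanFinrank]
  exact Submodule.spanRank_sup_le_sum_spanRank

lemma exists_ideal_map_eq_and_spanFinrank_le {R S : Type*} [Semiring R] [Semiring S] {f : R →+* S}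
    (hf : Function.Surjective f) {I : Ideal S} (hI : I.FG) :
    ∃ K : Ideal R, K.FG ∧ K.map f = I ∧ K.spanFinrank ≤ I.spanFinrank := by
  obtain ⟨s, hcard, rfl⟩ := Submodule.FG.exists_span_finset_card_eq_spanFinrank hI
  have hfinite : (Function.surjInv hf '' s).Finite := s.finite_toSet.image _
  refine ⟨Ideal.span (Function.surjInv hf '' s), Submodule.fg_span hfinite, ?_, ?_⟩
  · rw [Ideal.map_span, (Function.rightInverse_surjInv hf).image_image]
  · rw [← hcard, ← Set.ncard_coe_finset]
    exact (Submodule.spanFinrank_span_le_ncard_of_finite hfinite).trans Set.ncard_image_le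

section EmbeddingDimension

variable {A : Type*} [CommRing A] [IsLocalRing A] [IsNoetherianRing A] {J : Ideal A}

lemma spanFinrank_maximalIdeal_le_add {B : Type*} [CommRing B] [IsLocalRing B] {f : A →+* B}
    (hf : Function.Surjective f) (hJ : J ≤ maximalIdeal A)
    (hker : RingHom.ker f ≤ J ⊔ maximalIdeal A ^ 2) :
    (maximalIdeal A).spanFinrank ≤ (maximalIdeal B).spanFinrank + J.spanFinrank := by
  have : IsNoetherianRing B := isNoetherianRing_of_surjective A B f hf
  obtain ⟨K, hKfg, hKmap, hKrank⟩ :=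
    exists_ideal_map_eq_and_spanFinrank_le hf (IsNoetherian.noetherian (maximalIdeal B))
  have hmax : maximalIdeal A = K ⊔ RingHom.ker f := by
    rw [RingHom.ker_eq_comap_bot, ← Ideal.comap_map_of_surjective f hf, hKmap]
    exact (eq_maximalIdeal (Ideal.comap_isMaximal_of_surjective f hf)).symm
  have hsup : maximalIdeal A = K ⊔ J := by
    refine le_antisymm ?_ (sup_le (hmax ▸ le_sup_left) hJ)
    refine Submodule.le_of_le_smul_of_le_jacobson_bot (IsNoetherian.noetherian _)
      (maximalIdeal_le_jacobson _) ?_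
    calc maximalIdeal A = K ⊔ RingHom.ker f := hmax
      _ ≤ K ⊔ (J ⊔ maximalIdeal A ^ 2) := sup_le_sup_left hker K
      _ = K ⊔ J ⊔ maximalIdeal A • maximalIdeal A := by rw [sup_assoc, smul_eq_mul, pow_two]
  calc (maximalIdeal A).spanFinrank = (K ⊔ J).spanFinrank := by rw [← hsup]
    _ ≤ K.spanFinrank + J.spanFinrank := spanFinrank_sup_le hKfg (IsNoetherian.noetherian J)
    _ ≤ (maximalIdeal B).spanFinrank + J.spanFinrank := by gcongr

theorem length_le_spanFinrank_of_isRegularLocalRing_quotient {rs : List A}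
    (hrs : IsRegular A rs) [IsRegularLocalRing (A ⧸ Ideal.ofList rs)] (hJ : J ≤ maximalIdeal A)
    (hle : Ideal.ofList rs ≤ J ⊔ maximalIdeal A ^ 2) :
    rs.length ≤ J.spanFinrank := by
  let B := A ⧸ Ideal.ofList rs
  have hgen : (maximalIdeal A).spanFinrank ≤ (maximalIdeal B).spanFinrank + J.spanFinrank :=
    spanFinrank_maximalIdeal_le_add Ideal.Quotient.mk_surjective hJ (Ideal.mk_ker.trans_le hle)
  have hdim : ((maximalIdeal B).spanFinrank + rs.length : WithBot ℕ∞) = ringKrullDim A := by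
    rw [IsRegularLocalRing.spanFinrank_maximalIdeal]
    exact ringKrullDim_add_length_eq_ringKrullDim_of_isRegular rs hrs
  have hkrull : (maximalIdeal B).spanFinrank + rs.length ≤ (maximalIdeal A).spanFinrank := by
    exact_mod_cast hdim.trans_le (ringKrullDim_le_spanFinrank_maximalIdeal A)
  omega

end EmbeddingDimension

section Localization

lemma IsRegularLocal.isRegularLocalRing {R : Type*} [CommRing R] (hR : IsRegularLocal R) :
    IsRegularLocalRing R := by
  obtain ⟨_, _, s, hmax, hcard⟩ := hR
  refine IsRegularLocalRing.of_spanFinrank_maximalIdeal_le R ?_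
  rw [← hcard, ← eq_maximalIdeal hmax, Nat.cast_le, ← Set.ncard_coe_finset]
  exact Submodule.spanFinrank_span_le_ncard_of_finite s.finite_toSet

variable {R : Type*} [CommRing R] {q : Ideal R} [q.IsPrime]

lemma isRegularLocalRing_localization_quotient {I : Ideal R} (hI : I ≤ q)
    (hreg : regularAtImage I q) :
    IsRegularLocalRing
      (Localization.AtPrime q ⧸ I.map (algebraMap R (Localization.AtPrime q))) := by
  have hP : (q.map (Ideal.Quotient.mk I)).IsPrime := Ideal.isPrime_map_quotientMk_of_isPrime hI
  have : IsRegularLocalRing (locAt _ hP) := (hreg hP).isRegularLocalRing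
  have hcompl : Algebra.algebraMapSubmonoid (R ⧸ I) q.primeCompl =
      (q.map (Ideal.Quotient.mk I)).primeCompl := by
    have : (q.map (Ideal.Quotient.mk I)).LiesOver q := ⟨(Ideal.comap_map_mk hI).symm⟩
    exact Ideal.algebraMapSubmonoid_primeCompl_of_liesOver_surjective _ q
      Ideal.Quotient.mk_surjective
  have : IsLocalization (q.map (Ideal.Quotient.mk I)).primeCompl
      (Localization.AtPrime q ⧸ I.map (algebraMap R (Localization.AtPrime q))) :=
    hcompl ▸ inferInstance
  exact .of_ringEquiv (IsLocalization.algEquiv (q.map (Ideal.Quotient.mk I)).primeCompl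
    (locAt _ hP) _).toRingEquiv

theorem length_le_spanFinrank_of_regularAtImage [IsNoetherianRing R] {rs : List R}
    (hrs : IsWeaklyRegular R rs) (hreg : regularAtImage (Ideal.ofList rs) q) {J : Ideal R}
    (hJ : J ≤ q) (hle : Ideal.ofList rs ≤ J ⊔ q ^ 2) :
    rs.length ≤ J.spanFinrank := by
  let A := Localization.AtPrime q
  let φ := algebraMap R A
  have hofList : Ideal.ofList rs ≤ q := hle.trans (sup_le hJ (Ideal.pow_le_self two_ne_zero))
  have hmem : ∀ r ∈ rs, r ∈ q := fun r hr => hofList (Ideal.subset_span hr)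
  have hregA : IsRegular A (rs.map φ) := hrs.isRegular_of_isLocalization_of_mem A q hmem
  have hmap : q.map φ = maximalIdeal A := Localization.AtPrime.map_eq_maximalIdeal
  have : IsRegularLocalRing (A ⧸ Ideal.ofList (rs.map φ)) := by
    rw [← Ideal.map_ofList]
    exact isRegularLocalRing_localization_quotient hofList hreg
  calc rs.length = (rs.map φ).length := (List.length_map φ).symm
    _ ≤ (J.map φ).spanFinrank := by
      refine length_le_spanFinrank_of_isRegularLocalRing_quotient hregA
        ((Ideal.map_mono hJ).trans_eq hmap) ?_
      rw [← Ideal.map_ofList, ← hmap, ← Ideal.map_pow, ← Ideal.map_sup]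
      exact Ideal.map_mono hle
    _ ≤ J.spanFinrank := Ideal.spanFinrank_map_le_of_fg φ (IsNoetherian.noetherian J)

end Localization

lemma ofList_ofFn_eq_span_range {R : Type*} [Semiring R] {n : ℕ} (v : Fin n → R) :
    Ideal.ofList (List.ofFn v) = Ideal.span (Set.range v) := by
  simp only [Ideal.ofList, List.mem_ofFn', Set.setOf_mem_eq]

theorem statement10_general {R : Type*} [CommRing R] [IsNoetherianRing R] {q : Ideal R} [q.IsPrime]
    {p t : ℕ} {hs : Fin p → R} {gs : Fin t → R} (hhseq : IsWeaklyRegular R (List.ofFn hs))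
    (hreg : regularAtImage (Ideal.span (Set.range hs)) q) (hgs : ∀ j, gs j ∈ q)
    (b : Fin p → Fin t → R) (hcong : ∀ i, hs i - ∑ j, b i j * gs j ∈ q ^ 2) :
    p ≤ t := by
  have hspan : Ideal.ofList (List.ofFn hs) ≤ Ideal.span (Set.range gs) ⊔ q ^ 2 := by
    rw [ofList_ofFn_eq_span_range, Ideal.span_le]
    rintro _ ⟨i, rfl⟩
    rw [← add_sub_cancel (∑ j, b i j * gs j) (hs i)]
    exact Submodule.add_mem_sup (Ideal.sum_mem _ fun j _ =>
      Ideal.mul_mem_left _ _ (Ideal.subset_span ⟨j, rfl⟩)) (hcong i)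
  have hrank : (Ideal.span (Set.range gs)).spanFinrank ≤ t := by
    rw [← Set.image_univ]
    refine (Submodule.spanFinrank_span_le_ncard_of_finite (Set.toFinite _)).trans ?_
    simpa using Set.ncard_image_le (f := gs) (s := Set.univ)
  calc p = (List.ofFn hs).length := (List.length_ofFn ..).symm
    _ ≤ (Ideal.span (Set.range gs)).spanFinrank :=
      length_le_spanFinrank_of_regularAtImage hhseq ((ofList_ofFn_eq_span_range hs).symm ▸ hreg)
        (Ideal.span_le.2 (Set.range_subset_iff.2 hgs)) hspan
    _ ≤ t := hrank

/-- Lemma `representation` (1): in the presentation `h_i ≡ Σ_{j≤t} b_{ij} g_j mod g²` one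
has `t ≥ p`. -/
theorem statement10 {k : Type*} [Field k] [CharZero k] {m : ℕ}
    (h g : Ideal (MvPolynomial (Fin m) k)) (hle : h ≤ g) (hrad : g.IsRadical)
    {p n : ℕ} (hs : Fin p → MvPolynomial (Fin m) k) (gs : Fin n → MvPolynomial (Fin m) k)
    (hhseq : RingTheory.Sequence.IsRegular (MvPolynomial (Fin m) k) (List.ofFn hs))
    (hhgen : h = Ideal.span (Set.range hs))
    (hgseq : RingTheory.Sequence.IsRegular (MvPolynomial (Fin m) k) (List.ofFn gs))
    (hggen : g = Ideal.span (Set.range gs))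
    (hreg : ∀ q ∈ g.minimalPrimes, regularAtImage h q)
    (t : ℕ) (htn : t ≤ n)
    (b : Fin p → Fin t → MvPolynomial (Fin m) k)
    (hcong : ∀ i : Fin p, hs i - ∑ j, b i j * gs (Fin.castLE htn j) ∈ g ^ 2)
    (hb1 : ∀ i j, b i j ∈ g → b i j = 0)
    (hb2 : ∀ j : Fin t, ∃ i, b i j ∉ g) :
    p ≤ t := by
  have hgtop : g ≠ ⊤ := by simpa [hggen, ofList_ofFn_eq_span_range] using hgseq.top_ne_smul.symm
  obtain ⟨q, hq⟩ := Ideal.nonempty_minimalPrimes hgtop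
  have : q.IsPrime := hq.1.1
  have hgq : ∀ j, gs j ∈ q := fun j => hq.1.2 (hggen ▸ Ideal.subset_span ⟨j, rfl⟩)
  exact statement10_general hhseq.1 (hhgen ▸ hreg q hq) (fun j => hgq _) b
    fun i => Ideal.pow_right_mono hq.1.2 2 (hcong i)
end
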